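/- There exist absolute constants C, c > 0 such that the following holds for every φ ∈ (0,1] and every integer f' with C·log n ≤ f' ≤ n. Every n-vertex graph G with conductance Φ(G) ≥ φ and minimum degree at least f' admits a subgraph H ⊆ G with V(H) = V(G) such that: (i) the conductance of H is at least φ^2/(C·(log n)^c); (ii) |E(H)| ≤ C·f'·n·(log n)/φ; and (iii) the minimum degree of H is at least f'·φ/(C·(log n)^c). -/

import Mathlib

open SimpleGraph

/-- The volume of a vertex set `S`: the sum of the degrees (in `G`) of the vertices of `S`. -/
noncomputable def vol {V : Type} (G : SimpleGraph V) (S : Finset V) : ℕ :=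
  ∑ v ∈ S, (G.neighborSet v).ncard

/-- The set of edges of `G` with exactly one endpoint in `S`. -/
def edgeBoundary {V : Type} (G : SimpleGraph V) (S : Finset V) : Set (Sym2 V) :=
  {e | e ∈ G.edgeSet ∧ ∃ u v : V, e = s(u, v) ∧ u ∈ S ∧ v ∉ S}

/-- The conductance of the cut `S` in `G`. -/
noncomputable def cutConductance {V : Type} [Fintype V] [DecidableEq V]
    (G : SimpleGraph V) (S : Finset V) : ℝ :=
  (edgeBoundary G S).ncard / (min (vol G S) (vol G Sᶜ) : ℕ)

/-- `G` is a `φ`-expander: every nonempty proper cut has conductance at least `φ`. -/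
def IsExpander {V : Type} [Fintype V] [DecidableEq V] (G : SimpleGraph V) (φ : ℝ) : Prop :=
  ∀ S : Finset V, S.Nonempty → S ≠ Finset.univ → φ ≤ cutConductance G S

/-!
For any edge weights `w`, the vertices of an expander can be joined to one another by short walks
of small total cost. Run Bellman–Ford from a set `S` carrying a quarter of the volume, truncating
distances at `Δ`: every superlevel set of the potential is a cut avoiding `S`, so by the coarea
formula one round contracts the degree-weighted sum of the potential by `1 - φ / 3`, up to an
additive `2 ∑ e, w e`. After `O(1 / φ)` rounds half of the volume is near `S`. Starting from all of
`V` and repeatedly halving `S` isolates a single hub near half of the volume, and `O(log n / φ)`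
further rounds connect everything to it.

Since this works for all weights, multiplicative weights picks `f * n` walks greedily so that,
simultaneously, no edge is used by more than `O(log n / φ)` of them, no vertex is the source of more
than `3 * f`, and every cut `S` with `2 * |S| ≤ n` is crossed by at least `f * |S| / 8`. In the
union of these walks the volume of `S` is then at most the length of the walks times the number of
walks visiting `S`, hence `O((log n / φ) ^ 2)` times the number of edges leaving `S`.
-/

section Cuts

variable {V : Type} {G : SimpleGraph V}

lemma ncard_neighborSet (G : SimpleGraph V) (v : V) [Fintype (G.neighborSet v)] :
    (G.neighborSet v).ncard = G.degree v := by
  rw [Set.ncard_eq_toFinset_card', Set.toFinset_card, G.card_neighborSet_eq_degree]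

lemma vol_eq_sum_degree (G : SimpleGraph V) [G.LocallyFinite] (S : Finset V) :
    vol G S = ∑ v ∈ S, G.degree v :=
  Finset.sum_congr rfl fun v _ => ncard_neighborSet G v

lemma vol_add_vol_compl [Fintype V] [DecidableEq V] (G : SimpleGraph V) (S : Finset V) :
    vol G S + vol G Sᶜ = vol G Finset.univ :=
  Finset.sum_add_sum_compl S _

lemma vol_mono (G : SimpleGraph V) {S T : Finset V} (h : S ⊆ T) : vol G S ≤ vol G T :=
  Finset.sum_le_sum_of_subset h

lemma vol_union_le [DecidableEq V] (G : SimpleGraph V) (S T : Finset V) :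
    vol G (S ∪ T) ≤ vol G S + vol G T :=
  (Nat.le_add_right _ _).trans_eq Finset.sum_union_inter

lemma vol_le_two_mul_ncard_edgeSet [Finite V] (G : SimpleGraph V) (S : Finset V) :
    vol G S ≤ 2 * G.edgeSet.ncard := by
  classical
  let : Fintype V := Fintype.ofFinite V
  calc vol G S ≤ vol G Finset.univ := vol_mono G S.subset_univ
    _ = 2 * G.edgeSet.ncard := by
      rw [vol_eq_sum_degree, G.sum_degrees_eq_twice_card_edges, ← G.coe_edgeFinset,
        Set.ncard_coe_finset]

lemma ncard_neighborSet_le_card [Fintype V] (G : SimpleGraph V) (v : V) :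
    (G.neighborSet v).ncard ≤ Fintype.card V := by
  simpa [Set.ncard_univ] using Set.ncard_le_ncard (Set.subset_univ (G.neighborSet v))

lemma vol_univ_le_card_sq [Fintype V] (G : SimpleGraph V) :
    vol G Finset.univ ≤ Fintype.card V ^ 2 := by
  rw [sq]
  exact Finset.sum_le_card_nsmul _ _ _ fun v _ => ncard_neighborSet_le_card G v

lemma vol_iSup_le {ι : Type*} [Fintype ι] (K : ι → SimpleGraph V) (S : Finset V) :
    vol (⨆ i, K i) S ≤ ∑ i, vol (K i) S := by
  unfold vol
  rw [Finset.sum_comm]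
  refine Finset.sum_le_sum fun v _ => ?_
  have hunion : (⨆ i, K i).neighborSet v = ⋃ i, (K i).neighborSet v := by
    ext u; simp
  rw [hunion]
  exact Set.ncard_iUnion_le_of_fintype _

lemma edgeBoundary_compl [Fintype V] [DecidableEq V] (G : SimpleGraph V) (S : Finset V) :
    edgeBoundary G Sᶜ = edgeBoundary G S := by
  ext e
  constructor <;> rintro ⟨he, u, v, rfl, hu, hv⟩ <;>
    exact ⟨he, v, u, Sym2.eq_swap, by simpa using hv, by simpa using hu⟩

lemma ncard_edgeBoundary [DecidableEq V] (G : SimpleGraph V) [G.LocallyFinite] (S : Finset V) :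
    (edgeBoundary G S).ncard = ∑ v ∈ S, (G.neighborFinset v \ S).card := by
  have himage : edgeBoundary G S =
      ((S.sigma fun v => G.neighborFinset v \ S).image fun p => s(p.1, p.2) : Finset (Sym2 V)) := by
    ext e
    simp only [edgeBoundary, Finset.coe_image, Set.mem_image, Finset.mem_coe, Finset.mem_sigma,
      Finset.mem_sdiff, mem_neighborFinset]
    constructor
    · rintro ⟨he, u, v, rfl, hu, hv⟩
      exact ⟨⟨u, v⟩, ⟨hu, he, hv⟩, rfl⟩
    · rintro ⟨⟨u, v⟩, ⟨hu, he, hv⟩, rfl⟩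
      exact ⟨he, u, v, rfl, hu, hv⟩
  rw [himage, Set.ncard_coe_finset, Finset.card_image_of_injOn, Finset.card_sigma]
  rintro ⟨u, v⟩ huv ⟨x, y⟩ hxy h
  simp only [Finset.coe_sigma, Set.mem_sigma_iff, Finset.mem_coe, Finset.mem_sdiff] at huv hxy
  rcases Sym2.eq_iff.mp h with ⟨rfl, rfl⟩ | ⟨rfl, rfl⟩
  · rfl
  · exact absurd hxy.1 huv.2.2

lemma ncard_edgeBoundary_singleton [Finite V] (G : SimpleGraph V) (v : V) :
    (edgeBoundary G {v}).ncard = (G.neighborSet v).ncard := by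
  classical
  let : Fintype V := Fintype.ofFinite V
  rw [ncard_edgeBoundary, Finset.sum_singleton,
    Finset.sdiff_eq_self_of_disjoint
      (Finset.disjoint_singleton_right.mpr (G.notMem_neighborFinset_self v)),
    G.card_neighborFinset_eq_degree, ncard_neighborSet]

lemma exists_mem_edges_edgeBoundary {S : Finset V} {u v : V} (p : G.Walk u v)
    (h : u ∈ S ↔ v ∉ S) : ∃ e ∈ p.edges, e ∈ edgeBoundary G S := by
  by_cases hu : u ∈ S
  · obtain ⟨d, hd, hfst, hsnd⟩ := p.exists_boundary_dart S hu (h.mp hu)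
    exact ⟨d.edge, List.mem_map_of_mem hd, d.edge_mem, d.fst, d.snd, rfl, hfst, hsnd⟩
  · obtain ⟨d, hd, hfst, hsnd⟩ := p.exists_boundary_dart (Sᶜ : Set V) hu (by simpa [hu] using h)
    exact ⟨d.edge, List.mem_map_of_mem hd, d.edge_mem, d.snd, d.fst, Sym2.eq_swap,
      by simpa using hsnd, hfst⟩

variable [Fintype V] [DecidableEq V]

lemma IsExpander.mono {φ ψ : ℝ} (hG : IsExpander G φ) (hψ : ψ ≤ φ) : IsExpander G ψ :=
  fun S hS hS' => hψ.trans (hG S hS hS')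

lemma IsExpander.of_subsingleton [Subsingleton V] (G : SimpleGraph V) (φ : ℝ) : IsExpander G φ :=
  fun _ hS hS' => absurd (Finset.eq_univ_of_forall fun y =>
    hS.elim fun x hx => Subsingleton.elim x y ▸ hx) hS'

lemma IsExpander.mul_min_vol_le {φ : ℝ} (hG : IsExpander G φ) (S : Finset V) :
    φ * min (vol G S : ℝ) (vol G Sᶜ) ≤ (edgeBoundary G S).ncard := by
  rcases (Nat.zero_le (min (vol G S) (vol G Sᶜ))).eq_or_lt with hzero | hpos
  · rw [← Nat.cast_min, ← hzero]
    simp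
  have hS : S.Nonempty := Finset.nonempty_iff_ne_empty.mpr fun h => by simp [h, vol] at hpos
  have hS' : S ≠ Finset.univ := fun h => by simp [h, vol] at hpos
  rw [← Nat.cast_min, ← le_div_iff₀ (by exact_mod_cast hpos)]
  exact hG S hS hS'

lemma isExpander_of_mul_vol_le {ψ : ℝ} (hψ : 0 ≤ ψ) (hdeg : ∀ v, 0 < (G.neighborSet v).ncard)
    (h : ∀ S : Finset V, S.Nonempty → 2 * S.card ≤ Fintype.card V →
      ψ * vol G S ≤ (edgeBoundary G S).ncard) : IsExpander G ψ := by
  intro S hS hS'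
  have hSc : Sᶜ.Nonempty := by
    rwa [Finset.nonempty_iff_ne_empty, Ne, Finset.compl_eq_empty_iff]
  have vol_pos (T : Finset V) (hT : T.Nonempty) : 0 < vol G T :=
    Finset.sum_pos (fun v _ => hdeg v) hT
  rw [cutConductance, le_div_iff₀ (by exact_mod_cast lt_min (vol_pos S hS) (vol_pos _ hSc)),
    Nat.cast_min]
  by_cases hcard : 2 * S.card ≤ Fintype.card V
  · exact (mul_le_mul_of_nonneg_left (min_le_left _ _) hψ).trans (h S hS hcard)
  · rw [← edgeBoundary_compl]
    exact (mul_le_mul_of_nonneg_left (min_le_right _ _) hψ).trans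
      (h _ hSc (by rw [Finset.card_compl]; omega))

lemma IsExpander.mul_vol_le_of_disjoint {φ : ℝ} (hG : IsExpander G φ) (hφ : 0 ≤ φ)
    {B X : Finset V} (hB : vol G Finset.univ ≤ 4 * vol G B) (hX : Disjoint X B) :
    φ / 3 * vol G X ≤ (edgeBoundary G X).ncard := by
  have hBX : vol G B ≤ vol G Xᶜ := vol_mono G (Finset.subset_compl_iff_disjoint_left.mpr hX)
  have hX3 : vol G X ≤ 3 * vol G Xᶜ := by
    have := vol_add_vol_compl G X
    omega
  have hmin : (vol G X : ℝ) / 3 ≤ min (vol G X : ℝ) (vol G Xᶜ) := by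
    refine le_min (by linarith [(vol G X).cast_nonneg (α := ℝ)]) ?_
    rw [div_le_iff₀' (by norm_num)]
    exact_mod_cast hX3
  calc φ / 3 * vol G X = φ * (vol G X / 3) := by ring
    _ ≤ φ * min (vol G X : ℝ) (vol G Xᶜ) := mul_le_mul_of_nonneg_left hmin hφ
    _ ≤ (edgeBoundary G X).ncard := hG.mul_min_vol_le X

end Cuts

section WalkCost

variable {V : Type*} {G : SimpleGraph V} {w : Sym2 V → ℝ} {u v x : V}

/-- The total weight of the edges traversed by a walk, counted with multiplicity. -/
def walkCost (w : Sym2 V → ℝ) (p : G.Walk u v) : ℝ :=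
  (p.edges.map w).sum

@[simp] lemma walkCost_nil (w : Sym2 V → ℝ) : walkCost w (Walk.nil : G.Walk u u) = 0 := by
  simp [walkCost]

@[simp] lemma walkCost_cons (w : Sym2 V → ℝ) (h : G.Adj u v) (p : G.Walk v x) :
    walkCost w (p.cons h) = w s(u, v) + walkCost w p := by
  simp [walkCost]

@[simp] lemma walkCost_append (w : Sym2 V → ℝ) (p : G.Walk u v) (q : G.Walk v x) :
    walkCost w (p.append q) = walkCost w p + walkCost w q := by
  simp [walkCost]

@[simp] lemma walkCost_reverse (w : Sym2 V → ℝ) (p : G.Walk u v) :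
    walkCost w p.reverse = walkCost w p := by
  simp [walkCost]

lemma sum_edges_toFinset_le_walkCost [DecidableEq V] (hw : ∀ e, 0 ≤ w e) (p : G.Walk u v) :
    ∑ e ∈ p.edges.toFinset, w e ≤ walkCost w p := by
  rw [walkCost, Finset.sum_list_map_count]
  refine Finset.sum_le_sum fun e he => ?_
  rw [nsmul_eq_mul]
  refine le_mul_of_one_le_left (hw e) ?_
  exact_mod_cast List.count_pos_iff.mpr (List.mem_toFinset.mp he)

/-- There is a walk from `u` to `v` in `G` with at most `i` edges and of cost at most `r`: a
hop-limited form of weighted distance. -/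
def ReachableWithin (G : SimpleGraph V) (w : Sym2 V → ℝ) (i : ℕ) (r : ℝ) (u v : V) : Prop :=
  ∃ p : G.Walk u v, p.length ≤ i ∧ walkCost w p ≤ r

namespace ReachableWithin

variable {i j : ℕ} {r t : ℝ}

lemma refl (G : SimpleGraph V) (w : Sym2 V → ℝ) (u : V) : ReachableWithin G w 0 0 u u :=
  ⟨Walk.nil, by simp, by simp⟩

lemma mono (h : ReachableWithin G w i r u v) (hij : i ≤ j) (hrt : r ≤ t) :
    ReachableWithin G w j t u v :=
  let ⟨p, hlen, hcost⟩ := h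
  ⟨p, hlen.trans hij, hcost.trans hrt⟩

lemma cons (hadj : G.Adj u v) (h : ReachableWithin G w i r v x) :
    ReachableWithin G w (i + 1) (r + w s(u, v)) u x := by
  obtain ⟨p, hlen, hcost⟩ := h
  exact ⟨p.cons hadj, by simpa using hlen, by rw [walkCost_cons]; linarith⟩

lemma trans (huv : ReachableWithin G w i r u v) (hvx : ReachableWithin G w j t v x) :
    ReachableWithin G w (i + j) (r + t) u x := by
  obtain ⟨p, hp, hpcost⟩ := huv
  obtain ⟨q, hq, hqcost⟩ := hvx
  exact ⟨p.append q, by rw [Walk.length_append]; omega, by rw [walkCost_append]; linarith⟩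

end ReachableWithin

lemma sum_sym2_pos [Fintype V] [Nonempty V] (hw : ∀ e, 0 < w e) : 0 < ∑ e, w e :=
  Finset.sum_pos (fun e _ => hw e) ⟨s(Classical.arbitrary V, Classical.arbitrary V),
    Finset.mem_univ _⟩

lemma sum_sum_neighborFinset_edge [Fintype V] [DecidableRel G.Adj] (w : Sym2 V → ℝ) :
    ∑ v, ∑ u ∈ G.neighborFinset v, w s(v, u) = 2 * ∑ e ∈ G.edgeFinset, w e := by
  classical
  calc ∑ v, ∑ u ∈ G.neighborFinset v, w s(v, u)
      = ∑ v, ∑ d : G.Dart with d.fst = v, w d.edge := by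
        refine Finset.sum_congr rfl fun v _ => ?_
        rw [G.dart_fst_fiber, Finset.sum_image fun _ _ _ _ h => G.dartOfNeighborSet_injective v h,
          Finset.sum_subtype (p := (· ∈ G.neighborSet v)) _ (by simp)]
        rfl
    _ = ∑ d : G.Dart, w d.edge := Finset.sum_fiberwise _ _ _
    _ = ∑ e ∈ G.edgeFinset, ∑ d : G.Dart with d.edge = e, w d.edge :=
        (Finset.sum_fiberwise_of_maps_to (fun d _ => mem_edgeFinset.mpr d.edge_mem) _).symm
    _ = 2 * ∑ e ∈ G.edgeFinset, w e := by
        rw [Finset.mul_sum]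
        refine Finset.sum_congr rfl fun e he => ?_
        rw [Finset.sum_congr rfl fun d hd => congrArg w (Finset.mem_filter.mp hd).2,
          Finset.sum_const, G.dart_edge_fiber_card e (mem_edgeFinset.mp he), two_nsmul, two_mul]

end WalkCost

section Coarea

open MeasureTheory

lemma integrable_mul_indicator_Ico (c x y : ℝ) :
    Integrable fun t => c * (Set.Ico x y).indicator (1 : ℝ → ℝ) t :=
  ((integrable_indicator_iff measurableSet_Ico).mpr
    (integrableOn_const measure_Ico_lt_top.ne)).const_mul c

lemma integral_mul_indicator_Ico (c x y : ℝ) :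
    ∫ t, c * (Set.Ico x y).indicator (1 : ℝ → ℝ) t = c * max (y - x) 0 := by
  rw [integral_const_mul, integral_indicator_one measurableSet_Ico, Real.volume_real_Ico]

-- Write both sides as integrals of indicators over the levels `t`.
lemma sum_mul_le_sum_sum_mul_max {ι : Type*} [Fintype ι] {d g : ι → ℝ} {a : ι → ι → ℝ}
    (hg : 0 ≤ g)
    (h : ∀ t ≥ 0, ∑ v with t < g v, d v ≤ ∑ v with t < g v, ∑ u with g u ≤ t, a v u) :
    ∑ v, d v * g v ≤ ∑ v, ∑ u, a v u * max (g v - g u) 0 := by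
  calc ∑ v, d v * g v
      = ∫ t, ∑ v, d v * (Set.Ico 0 (g v)).indicator (1 : ℝ → ℝ) t := by
        rw [integral_finsetSum _ fun v _ => integrable_mul_indicator_Ico _ _ _]
        refine Finset.sum_congr rfl fun v _ => ?_
        rw [integral_mul_indicator_Ico, sub_zero, max_eq_left (show 0 ≤ g v from hg v)]
    _ ≤ ∫ t, ∑ v, ∑ u, a v u * (Set.Ico (g u) (g v)).indicator (1 : ℝ → ℝ) t := by
        refine integral_mono (integrable_finsetSum _ fun v _ => integrable_mul_indicator_Ico _ _ _)
          (integrable_finsetSum _ fun v _ => integrable_finsetSum _ fun u _ =>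
            integrable_mul_indicator_Ico _ _ _) fun t => ?_
        rcases lt_or_ge t 0 with ht | ht
        · refine (Finset.sum_eq_zero fun v _ => ?_).trans_le
            (Finset.sum_nonneg fun v _ => Finset.sum_nonneg fun u _ => ?_)
          · simp [ht]
          · simp [ht.trans_le (hg u)]
        · have hlevel := h t ht
          rw [Finset.sum_filter, Finset.sum_filter] at hlevel
          calc ∑ v, d v * (Set.Ico 0 (g v)).indicator (1 : ℝ → ℝ) t
              = ∑ v, if t < g v then d v else 0 := by simp [Set.indicator_apply, ht]
            _ ≤ ∑ v, if t < g v then ∑ u with g u ≤ t, a v u else 0 := hlevel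
            _ = ∑ v, ∑ u, a v u * (Set.Ico (g u) (g v)).indicator (1 : ℝ → ℝ) t := by
              refine Finset.sum_congr rfl fun v _ => ?_
              by_cases hv : t < g v <;> simp [Set.indicator_apply, hv, Finset.sum_filter]
    _ = ∑ v, ∑ u, a v u * max (g v - g u) 0 := by
        rw [integral_finsetSum _ fun v _ => integrable_finsetSum _ fun u _ =>
          integrable_mul_indicator_Ico _ _ _]
        refine Finset.sum_congr rfl fun v _ => ?_
        rw [integral_finsetSum _ fun u _ => integrable_mul_indicator_Ico _ _ _]
        exact Finset.sum_congr rfl fun u _ => integral_mul_indicator_Ico _ _ _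

variable {V : Type} [Fintype V] {G : SimpleGraph V} [DecidableRel G.Adj]

lemma mul_sum_degree_mul_le {ψ : ℝ} {g : V → ℝ} (hg : 0 ≤ g)
    (hexp : ∀ X : Finset V, (∀ v ∈ X, 0 < g v) → ψ * vol G X ≤ (edgeBoundary G X).ncard) :
    ψ * ∑ v, G.degree v * g v ≤ ∑ v, ∑ u ∈ G.neighborFinset v, max (g v - g u) 0 := by
  classical
  calc ψ * ∑ v, G.degree v * g v = ∑ v, (ψ * G.degree v) * g v := by
        simp only [Finset.mul_sum, mul_assoc]
    _ ≤ ∑ v, ∑ u, (if G.Adj v u then 1 else 0) * max (g v - g u) 0 := by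
        refine sum_mul_le_sum_sum_mul_max hg fun t ht => ?_
        have hcut := hexp {v | t < g v} fun v hv => ht.trans_lt (by simpa using hv)
        rw [vol_eq_sum_degree, ncard_edgeBoundary] at hcut
        push_cast at hcut
        rw [Finset.mul_sum] at hcut
        refine hcut.trans_eq (Finset.sum_congr rfl fun v _ => ?_)
        rw [Finset.sum_boole]
        congr 2
        ext u
        simp [and_comm]
    _ = ∑ v, ∑ u ∈ G.neighborFinset v, max (g v - g u) 0 := by
        simp [G.neighborFinset_eq_filter, Finset.sum_filter]

end Coarea

section Relaxation

variable {V : Type*} [Fintype V] {G : SimpleGraph V} [DecidableRel G.Adj] {w : Sym2 V → ℝ}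
  {g : V → ℝ} {u v : V}

/-- One Bellman–Ford step: each value of the potential `g` is lowered to what the best incident
edge allows. -/
noncomputable def relax (G : SimpleGraph V) [DecidableRel G.Adj] (w : Sym2 V → ℝ) (g : V → ℝ)
    (v : V) : ℝ :=
  (G.neighborFinset v).fold min (g v) fun u => g u + w s(v, u)

lemma le_relax_iff {a : ℝ} :
    a ≤ relax G w g v ↔ a ≤ g v ∧ ∀ u, G.Adj v u → a ≤ g u + w s(v, u) := by
  simp [relax, Finset.le_fold_min]

lemma relax_le_iff {a : ℝ} :
    relax G w g v ≤ a ↔ g v ≤ a ∨ ∃ u, G.Adj v u ∧ g u + w s(v, u) ≤ a := by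
  simp [relax, Finset.fold_min_le]

lemma relax_le_self : relax G w g v ≤ g v := (le_relax_iff.mp le_rfl).1

lemma relax_le_add (h : G.Adj v u) : relax G w g v ≤ g u + w s(v, u) :=
  (le_relax_iff.mp le_rfl).2 u h

lemma relax_nonneg (hw : ∀ e, 0 ≤ w e) (hg : 0 ≤ g) : 0 ≤ relax G w g := fun v =>
  le_relax_iff.mpr ⟨hg v, fun u _ => add_nonneg (hg u) (hw _)⟩

variable [DecidableEq V]

/-- The distance to `S` along walks with at most `i` edges, truncated at `Δ`. -/
noncomputable def truncDist (G : SimpleGraph V) [DecidableRel G.Adj] (w : Sym2 V → ℝ)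
    (S : Finset V) (Δ : ℝ) (i : ℕ) : V → ℝ :=
  (relax G w)^[i] fun v => if v ∈ S then 0 else Δ

variable {S : Finset V} {Δ : ℝ}

lemma truncDist_zero : truncDist G w S Δ 0 v = if v ∈ S then 0 else Δ := rfl

lemma truncDist_succ (i : ℕ) :
    truncDist G w S Δ (i + 1) = relax G w (truncDist G w S Δ i) :=
  Function.iterate_succ_apply' _ _ _

lemma truncDist_nonneg (hw : ∀ e, 0 ≤ w e) (hΔ : 0 ≤ Δ) (i : ℕ) :
    0 ≤ truncDist G w S Δ i := by
  induction i with
  | zero => exact fun v => by rw [truncDist_zero]; split_ifs <;> simp [hΔ]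
  | succ i ih => rw [truncDist_succ]; exact relax_nonneg hw ih

lemma truncDist_nonpos (hv : v ∈ S) (i : ℕ) : truncDist G w S Δ i v ≤ 0 := by
  induction i with
  | zero => simp [truncDist_zero, hv]
  | succ i ih => rw [truncDist_succ]; exact relax_le_self.trans ih

lemma exists_reachableWithin_truncDist (hw : ∀ e, 0 ≤ w e) {i : ℕ}
    (h : truncDist G w S Δ i v < Δ) :
    ∃ s ∈ S, ReachableWithin G w i (truncDist G w S Δ i v) v s := by
  induction i generalizing v with
  | zero =>
    by_cases hv : v ∈ S
    · exact ⟨v, hv, by simpa [truncDist_zero, hv] using ReachableWithin.refl G w v⟩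
    · simp [truncDist_zero, hv] at h
  | succ i ih =>
    rw [truncDist_succ] at h ⊢
    rcases relax_le_iff.mp (le_refl (relax G w (truncDist G w S Δ i) v)) with
      hstay | ⟨u, hadj, hmove⟩
    · obtain ⟨s, hs, hreach⟩ := ih (hstay.trans_lt h)
      exact ⟨s, hs, hreach.mono i.le_succ hstay⟩
    · obtain ⟨s, hs, hreach⟩ := ih (v := u) (by linarith [hw s(v, u)])
      exact ⟨s, hs, (hreach.cons hadj).mono le_rfl hmove⟩

end Relaxation

section RelaxationDecay

variable {V : Type} [Fintype V] {G : SimpleGraph V} [DecidableRel G.Adj] {w : Sym2 V → ℝ}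
  {ψ : ℝ}

-- By the coarea bound `g` descends steeply along edges, and each descent exceeding the weight of
-- its edge is realised by the relaxation.
lemma sum_degree_mul_relax_le {g : V → ℝ} (hw : ∀ e, 0 ≤ w e) (hg : 0 ≤ g)
    (hexp : ∀ X : Finset V, (∀ v ∈ X, 0 < g v) → ψ * vol G X ≤ (edgeBoundary G X).ncard) :
    ∑ v, G.degree v * relax G w g v ≤ (1 - ψ) * ∑ v, G.degree v * g v + 2 * ∑ e, w e := by
  have descent_le (v u : V) (h : G.Adj v u) :
      max (g v - g u) 0 ≤ g v - relax G w g v + w s(v, u) :=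
    max_le (by linarith [relax_le_add (w := w) (g := g) h])
      (by linarith [relax_le_self (G := G) (w := w) (g := g) (v := v), hw s(v, u)])
  have hdescent : ψ * ∑ v, G.degree v * g v ≤
      ∑ v, G.degree v * (g v - relax G w g v) + 2 * ∑ e ∈ G.edgeFinset, w e := by
    refine (mul_sum_degree_mul_le hg hexp).trans ?_
    rw [← sum_sum_neighborFinset_edge, ← Finset.sum_add_distrib]
    refine Finset.sum_le_sum fun v _ => ?_
    rw [← G.card_neighborFinset_eq_degree, ← nsmul_eq_mul, ← Finset.sum_const,
      ← Finset.sum_add_distrib]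
    exact Finset.sum_le_sum fun u hu => descent_le v u ((G.mem_neighborFinset v u).mp hu)
  have hweight : ∑ e ∈ G.edgeFinset, w e ≤ ∑ e, w e :=
    Finset.sum_le_sum_of_subset_of_nonneg (Finset.subset_univ _) fun e _ _ => hw e
  simp only [mul_sub, Finset.sum_sub_distrib] at hdescent
  linarith

lemma sum_degree_mul_truncDist_le [DecidableEq V] {S : Finset V} {Δ : ℝ}
    (hw : ∀ e, 0 ≤ w e) (hΔ : 0 ≤ Δ) (hψ : 0 < ψ) (hψ1 : ψ ≤ 1)
    (hexp : ∀ X : Finset V, Disjoint X S → ψ * vol G X ≤ (edgeBoundary G X).ncard) (i : ℕ) :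
    ∑ v, G.degree v * truncDist G w S Δ i v ≤
      (1 - ψ) ^ i * (Δ * vol G Finset.univ) + 2 * (∑ e, w e) / ψ := by
  have hW : 0 ≤ 2 * (∑ e, w e) / ψ := by
    have := Finset.sum_nonneg fun e (_ : e ∈ Finset.univ) => hw e
    positivity
  induction i with
  | zero =>
    rw [vol_eq_sum_degree, pow_zero, one_mul, Nat.cast_sum, Finset.mul_sum]
    refine le_add_of_le_of_nonneg (Finset.sum_le_sum fun v _ => ?_) hW
    rw [mul_comm]
    refine mul_le_mul_of_nonneg_right ?_ (Nat.cast_nonneg _)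
    rw [truncDist_zero]
    split_ifs <;> simp [hΔ]
  | succ i ih =>
    have hstep := sum_degree_mul_relax_le hw (truncDist_nonneg (G := G) (S := S) hw hΔ i)
      fun X hX => hexp X (Finset.disjoint_left.mpr fun v hvX hvS =>
        (hX v hvX).not_ge (truncDist_nonpos hvS i))
    calc ∑ v, G.degree v * truncDist G w S Δ (i + 1) v
        ≤ (1 - ψ) * ∑ v, G.degree v * truncDist G w S Δ i v + 2 * ∑ e, w e := by
          rwa [truncDist_succ]
      _ ≤ (1 - ψ) * ((1 - ψ) ^ i * (Δ * vol G Finset.univ) + 2 * (∑ e, w e) / ψ) +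
          2 * ∑ e, w e := by gcongr
      _ = (1 - ψ) ^ (i + 1) * (Δ * vol G Finset.univ) + 2 * (∑ e, w e) / ψ := by
          field_simp
          ring

end RelaxationDecay

section Hub

lemma one_sub_pow_le_inv {x y : ℝ} {i : ℕ} (hx : x ≤ 1) (hy : 0 < y) (h : Real.log y ≤ i * x) :
    (1 - x) ^ i ≤ y⁻¹ :=
  calc (1 - x) ^ i ≤ Real.exp (-x) ^ i :=
        pow_le_pow_left₀ (by linarith) (Real.one_sub_le_exp_neg x) i
    _ = Real.exp (-(i * x)) := by rw [← Real.exp_nat_mul, mul_neg]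
    _ ≤ Real.exp (-Real.log y) := by gcongr
    _ = y⁻¹ := by rw [Real.exp_neg, Real.exp_log hy]

lemma log_four_lt_two : Real.log 4 < 2 := by
  rw [show (4 : ℝ) = 2 ^ 2 by norm_num, Real.log_pow]
  push_cast
  linarith [Real.log_two_lt_d9]

variable {V : Type} [Fintype V] {G : SimpleGraph V} {w : Sym2 V → ℝ}

lemma mul_vol_unreached_le {S : Finset V} {Δ ψ : ℝ} (hw : ∀ e, 0 ≤ w e) (hΔ : 0 ≤ Δ)
    (hψ : 0 < ψ) (hψ1 : ψ ≤ 1)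
    (hexp : ∀ X : Finset V, Disjoint X S → ψ * vol G X ≤ (edgeBoundary G X).ncard) (i : ℕ)
    {U : Finset V} (hU : ∀ v ∈ U, ∀ s ∈ S, ¬ ReachableWithin G w i Δ v s) :
    Δ * vol G U ≤ (1 - ψ) ^ i * (Δ * vol G Finset.univ) + 2 * (∑ e, w e) / ψ := by
  classical
  have hfar (v : V) (hv : v ∈ U) : Δ ≤ truncDist G w S Δ i v := by
    by_contra! hlt
    obtain ⟨s, hs, hreach⟩ := exists_reachableWithin_truncDist hw hlt
    exact hU v hv s hs (hreach.mono le_rfl hlt.le)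
  calc Δ * vol G U = ∑ v ∈ U, G.degree v * Δ := by
        rw [vol_eq_sum_degree, Nat.cast_sum, Finset.mul_sum]
        simp only [mul_comm]
    _ ≤ ∑ v ∈ U, G.degree v * truncDist G w S Δ i v := by
        gcongr with v hv
        exact hfar v hv
    _ ≤ ∑ v, G.degree v * truncDist G w S Δ i v :=
        Finset.sum_le_sum_of_subset_of_nonneg U.subset_univ fun v _ _ =>
          mul_nonneg (Nat.cast_nonneg _) (truncDist_nonneg hw hΔ i v)
    _ ≤ _ := sum_degree_mul_truncDist_le hw hΔ hψ hψ1 hexp i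

-- Halving `S`, one of the halves still serves a quarter of the volume; growing the part it serves
-- restores the loss.
lemma exists_hub_of_exists_half_near [Nonempty V] {h : ℕ} {r : ℝ}
    (hgrow : ∀ B : Finset V, vol G Finset.univ ≤ 4 * vol G B → ∃ B' : Finset V,
      vol G Finset.univ ≤ 2 * vol G B' ∧ ∀ v ∈ B', ∃ s ∈ B, ReachableWithin G w h r v s)
    (k : ℕ) {i : ℕ} {t : ℝ} {S B : Finset V} (hS : S.card ≤ 2 ^ k)
    (hB : vol G Finset.univ ≤ 2 * vol G B) (hBS : ∀ v ∈ B, ∃ s ∈ S, ReachableWithin G w i t v s) :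
    ∃ (o : V) (B' : Finset V), vol G Finset.univ ≤ 2 * vol G B' ∧
      ∀ v ∈ B', ReachableWithin G w (i + k * h) (t + k * r) v o := by
  classical
  induction k generalizing i t S B with
  | zero =>
    obtain ⟨o, hSo⟩ := Finset.card_le_one_iff_subset_singleton.mp hS
    refine ⟨o, B, hB, fun v hv => ?_⟩
    obtain ⟨s, hs, hreach⟩ := hBS v hv
    simpa [Finset.mem_singleton.mp (hSo hs)] using hreach
  | succ k ih =>
    let served (T : Finset V) : Finset V := {v ∈ B | ∃ s ∈ T, ReachableWithin G w i t v s}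
    have continue_with (T : Finset V) (hT : T.card ≤ 2 ^ k)
        (hquarter : vol G Finset.univ ≤ 4 * vol G (served T)) :
        ∃ (o : V) (B' : Finset V), vol G Finset.univ ≤ 2 * vol G B' ∧
          ∀ v ∈ B', ReachableWithin G w (i + (k + 1) * h) (t + (k + 1 : ℕ) * r) v o := by
      obtain ⟨B', hB', hnear⟩ := hgrow _ hquarter
      obtain ⟨o, B'', hB'', ho⟩ := ih hT hB' (i := h + i) (t := r + t) fun v hv => by
        obtain ⟨b, hb, hvb⟩ := hnear v hv
        obtain ⟨s, hs, hbs⟩ := (Finset.mem_filter.mp hb).2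
        exact ⟨s, hs, hvb.trans hbs⟩
      exact ⟨o, B'', hB'', fun v hv => (ho v hv).mono (by linarith) (by push_cast; linarith)⟩
    obtain ⟨T, hTS, hTcard⟩ := S.exists_subset_card_eq (Nat.div_le_self S.card 2)
    have hcover : B ⊆ served T ∪ served (S \ T) := fun v hv => by
      obtain ⟨s, hs, hreach⟩ := hBS v hv
      by_cases hsT : s ∈ T
      · exact Finset.mem_union_left _ (Finset.mem_filter.mpr ⟨hv, s, hsT, hreach⟩)
      · exact Finset.mem_union_right _
          (Finset.mem_filter.mpr ⟨hv, s, Finset.mem_sdiff.mpr ⟨hs, hsT⟩, hreach⟩)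
    have hvol := (vol_mono G hcover).trans (vol_union_le G _ _)
    have hcard := Finset.card_sdiff_of_subset hTS
    rw [pow_succ] at hS
    rcases le_or_gt (vol G Finset.univ) (4 * vol G (served T)) with hquarter | hquarter
    · exact continue_with T (by omega) hquarter
    · exact continue_with (S \ T) (by omega) (by omega)

variable [DecidableEq V] {φ : ℝ}

lemma IsExpander.exists_half_near [Nonempty V] (hG : IsExpander G φ) (hφ : 0 < φ) (hφ1 : φ ≤ 1)
    (hw : ∀ e, 0 < w e) {B : Finset V} (hB : vol G Finset.univ ≤ 4 * vol G B) :
    ∃ B' : Finset V, vol G Finset.univ ≤ 2 * vol G B' ∧ ∀ v ∈ B', ∃ s ∈ B,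
      ReachableWithin G w ⌈6 / φ⌉₊ (48 * (∑ e, w e) / (φ * vol G Finset.univ)) v s := by
  classical
  rcases (vol G Finset.univ).eq_zero_or_pos with hzero | hpos
  · exact ⟨∅, by simp [hzero], by simp⟩
  set Δ : ℝ := 48 * (∑ e, w e) / (φ * vol G Finset.univ) with hΔ_def
  have hD : (0 : ℝ) < vol G Finset.univ := by exact_mod_cast hpos
  have hΔ : 0 < Δ := by
    have := sum_sym2_pos hw
    positivity
  have hdecay : (1 - φ / 3) ^ ⌈6 / φ⌉₊ ≤ 4⁻¹ := by
    refine one_sub_pow_le_inv (by linarith) (by norm_num) (log_four_lt_two.le.trans ?_)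
    have := Nat.le_ceil (6 / φ)
    rw [div_le_iff₀ hφ] at this
    linarith
  set U : Finset V := {v | ∀ s ∈ B, ¬ ReachableWithin G w ⌈6 / φ⌉₊ Δ v s}
  refine ⟨Uᶜ, ?_, fun v hv => by simpa [U] using hv⟩
  have hunreached := mul_vol_unreached_le (U := U) (fun e => (hw e).le) hΔ.le
    (by positivity : 0 < φ / 3) (by linarith) (fun X hX => hG.mul_vol_le_of_disjoint hφ.le hB hX)
    ⌈6 / φ⌉₊ (by simp [U])
  have hweight : 2 * (∑ e, w e) / (φ / 3) = Δ * vol G Finset.univ / 8 := by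
    rw [hΔ_def]
    field_simp
    ring
  have hU : (vol G U : ℝ) ≤ 3 / 8 * vol G Finset.univ := by
    refine le_of_mul_le_mul_left ?_ hΔ
    nlinarith [mul_le_mul_of_nonneg_right hdecay (mul_nonneg hΔ.le hD.le)]
  have hsum : (vol G U : ℝ) + vol G Uᶜ = vol G Finset.univ := by
    exact_mod_cast vol_add_vol_compl G U
  exact_mod_cast (by linarith : (vol G Finset.univ : ℝ) ≤ 2 * vol G Uᶜ)

lemma IsExpander.exists_cost_near [Nonempty V] (hG : IsExpander G φ) (hφ : 0 < φ) (hφ1 : φ ≤ 1)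
    (hw : ∀ e, 0 < w e) {δ : ℝ} (hδ : 0 < δ) (hdeg : ∀ v, δ ≤ (G.neighborSet v).ncard) {h : ℕ}
    (hh : (1 - φ / 3) ^ h * vol G Finset.univ ≤ 1 / 4) {B : Finset V}
    (hB : vol G Finset.univ ≤ 4 * vol G B) :
    ∃ c : V → ℝ, (∀ v, ∃ s ∈ B, ReachableWithin G w h (c v) v s) ∧
      ∑ v, c v ≤ 9 * (∑ e, w e) / (φ * δ) := by
  classical
  have hW := sum_sym2_pos hw
  set c := truncDist G w B (12 * (∑ e, w e) / φ) h
  have hc : 0 ≤ c := truncDist_nonneg (fun e => (hw e).le) (by positivity) h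
  have hsum : ∑ v, G.degree v * c v ≤ 9 * (∑ e, w e) / φ := by
    calc ∑ v, G.degree v * c v
        ≤ (1 - φ / 3) ^ h * (12 * (∑ e, w e) / φ * vol G Finset.univ) +
            2 * (∑ e, w e) / (φ / 3) :=
          sum_degree_mul_truncDist_le (fun e => (hw e).le) (by positivity) (by positivity)
            (by linarith) (fun X hX => hG.mul_vol_le_of_disjoint hφ.le hB hX) h
      _ = 12 * (∑ e, w e) / φ * ((1 - φ / 3) ^ h * vol G Finset.univ) + 6 * (∑ e, w e) / φ := by
          field_simp
          ring
      _ ≤ 12 * (∑ e, w e) / φ * (1 / 4) + 6 * (∑ e, w e) / φ := by gcongr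
      _ = 9 * (∑ e, w e) / φ := by ring
  refine ⟨c, fun v => exists_reachableWithin_truncDist (fun e => (hw e).le) ?_, ?_⟩
  · have hdeg1 : (1 : ℝ) ≤ G.degree v := by
      rw [← ncard_neighborSet]
      exact_mod_cast Nat.one_le_iff_ne_zero.mpr fun h0 => by simpa [h0] using hδ.trans_le (hdeg v)
    calc c v ≤ G.degree v * c v := le_mul_of_one_le_left (hc v) hdeg1
      _ ≤ ∑ v, G.degree v * c v :=
        Finset.single_le_sum (f := fun v => G.degree v * c v)
          (fun v _ => mul_nonneg (Nat.cast_nonneg _) (hc v)) (Finset.mem_univ v)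
      _ ≤ 9 * (∑ e, w e) / φ := hsum
      _ < 12 * (∑ e, w e) / φ := by gcongr; norm_num
  · rw [← div_div, le_div_iff₀' hδ, Finset.mul_sum]
    refine (Finset.sum_le_sum fun v _ => mul_le_mul_of_nonneg_right ?_ (hc v)).trans hsum
    rw [← ncard_neighborSet]
    exact hdeg v

lemma IsExpander.exists_hub [Nonempty V] (hG : IsExpander G φ) (hφ : 0 < φ) (hφ1 : φ ≤ 1)
    (hw : ∀ e, 0 < w e) {δ : ℝ} (hδ : 0 < δ) (hdeg : ∀ v, δ ≤ (G.neighborSet v).ncard) {h k : ℕ}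
    (hh : (1 - φ / 3) ^ h * vol G Finset.univ ≤ 1 / 4) (hk : Fintype.card V ≤ 2 ^ k) :
    ∃ (o : V) (c : V → ℝ), (∀ v, ReachableWithin G w (h + k * ⌈6 / φ⌉₊) (c v) v o) ∧
      ∑ v, c v ≤ (9 + 48 * k) * (∑ e, w e) / (φ * δ) := by
  obtain ⟨o, B, hB, ho⟩ := exists_hub_of_exists_half_near
    (fun B hB => hG.exists_half_near hφ hφ1 hw hB) k (S := Finset.univ) (by simpa using hk)
    (B := Finset.univ) (by omega) fun v _ => ⟨v, Finset.mem_univ v, ReachableWithin.refl G w v⟩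
  obtain ⟨c, hc, hsum⟩ := hG.exists_cost_near hφ hφ1 hw hδ hdeg hh (B := B) (by omega)
  set r : ℝ := 48 * (∑ e, w e) / (φ * vol G Finset.univ)
  refine ⟨o, fun v => c v + (0 + k * r), fun v => ?_, ?_⟩
  · obtain ⟨s, hs, hvs⟩ := hc v
    exact (hvs.trans (ho s hs)).mono (by omega) le_rfl
  · have hvol : Fintype.card V * δ ≤ vol G Finset.univ := by
      rw [vol, Nat.cast_sum, ← nsmul_eq_mul]
      exact Finset.card_nsmul_le_sum _ _ _ fun v _ => hdeg v
    have hr : Fintype.card V * r ≤ 48 * (∑ e, w e) / (φ * δ) := by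
      have hW := sum_sym2_pos hw
      have : (0 : ℝ) < Fintype.card V := by exact_mod_cast Fintype.card_pos
      calc Fintype.card V * r
          ≤ Fintype.card V * (48 * (∑ e, w e) / (φ * (Fintype.card V * δ))) := by
            unfold r
            gcongr
        _ = 48 * (∑ e, w e) / (φ * δ) := by field_simp
    calc ∑ v, (c v + (0 + k * r)) = ∑ v, c v + k * (Fintype.card V * r) := by
          rw [Finset.sum_add_distrib, Finset.sum_const, Finset.card_univ, nsmul_eq_mul]
          ring
      _ ≤ 9 * (∑ e, w e) / (φ * δ) + k * (48 * (∑ e, w e) / (φ * δ)) := by gcongr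
      _ = (9 + 48 * k) * (∑ e, w e) / (φ * δ) := by ring

end Hub

section Routing

variable {V : Type*} [Fintype V] {G : SimpleGraph V}

/-- For every positive edge weighting `w`, walks of at most `L` edges joining all ordered pairs of
vertices can be chosen with total cost at most `κ` times the total weight. By linear programming
duality this says that unit demand between all pairs of vertices can be routed fractionally along
walks of at most `L` edges with congestion `κ`. -/
def RoutesUniformly (G : SimpleGraph V) (L : ℕ) (κ : ℝ) : Prop :=
  ∀ w : Sym2 V → ℝ, (∀ e, 0 < w e) → ∃ P : ∀ u v, G.Walk u v,
    (∀ u v, (P u v).length ≤ L) ∧ ∑ u, ∑ v, walkCost w (P u v) ≤ κ * ∑ e, w e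

lemma RoutesUniformly.mono {L L' : ℕ} {κ κ' : ℝ} (h : RoutesUniformly G L κ) (hL : L ≤ L')
    (hκ : κ ≤ κ') : RoutesUniformly G L' κ' := fun w hw =>
  let ⟨P, hlen, hcost⟩ := h w hw
  ⟨P, fun u v => (hlen u v).trans hL, hcost.trans <|
    mul_le_mul_of_nonneg_right hκ (Finset.sum_nonneg fun e _ => (hw e).le)⟩

end Routing

section ExpanderRouting

variable {V : Type} [Fintype V] {G : SimpleGraph V} {φ : ℝ}

lemma natCast_clog_two_le {n : ℕ} (hn : 1 ≤ Real.log n) : (Nat.clog 2 n : ℝ) ≤ 3 * Real.log n := by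
  have hn1 : 1 < n := by exact_mod_cast (Real.log_pos_iff n.cast_nonneg).mp (by linarith)
  have hpow : ((2 ^ (Nat.clog 2 n - 1) : ℕ) : ℝ) < n := by
    exact_mod_cast Nat.pow_pred_clog_lt_self one_lt_two hn1
  have hlog : (Nat.clog 2 n - 1) * Real.log 2 < Real.log n := by
    have := Real.log_lt_log (by positivity) hpow
    rwa [Nat.cast_pow, Real.log_pow, Nat.cast_pred (Nat.clog_pos one_lt_two hn1)] at this
  nlinarith [Real.log_two_gt_d9]

lemma one_sub_pow_mul_vol_univ_le (G : SimpleGraph V) (hφ : 0 < φ) (hφ1 : φ ≤ 1)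
    (hn : 1 ≤ Real.log (Fintype.card V)) :
    (1 - φ / 3) ^ ⌈12 * (Real.log (Fintype.card V) / φ)⌉₊ * vol G Finset.univ ≤ 1 / 4 := by
  set n := Fintype.card V
  have hn1 : (1 : ℝ) < n := (Real.log_pos_iff n.cast_nonneg).mp (by linarith)
  have hvol : (vol G Finset.univ : ℝ) ≤ n ^ 2 := by exact_mod_cast vol_univ_le_card_sq G
  have hlog : Real.log (4 * n ^ 2) ≤ ⌈12 * (Real.log n / φ)⌉₊ * (φ / 3) := by
    rw [Real.log_mul (by norm_num) (by positivity), Real.log_pow]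
    calc Real.log 4 + (2 : ℕ) * Real.log n ≤ 12 * (Real.log n / φ) * (φ / 3) := by
          field_simp
          push_cast
          linarith [log_four_lt_two]
      _ ≤ ⌈12 * (Real.log n / φ)⌉₊ * (φ / 3) := by gcongr; exact Nat.le_ceil _
  calc (1 - φ / 3) ^ ⌈12 * (Real.log n / φ)⌉₊ * vol G Finset.univ
      ≤ (4 * n ^ 2 : ℝ)⁻¹ * n ^ 2 := by
        gcongr
        exact one_sub_pow_le_inv (by linarith) (by positivity) hlog
    _ = 1 / 4 := by field_simp

variable [DecidableEq V]

lemma IsExpander.routesUniformly (hG : IsExpander G φ) (hφ : 0 < φ) (hφ1 : φ ≤ 1) {δ : ℝ}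
    (hδ : 0 < δ) (hdeg : ∀ v, δ ≤ (G.neighborSet v).ncard) {h k : ℕ}
    (hh : (1 - φ / 3) ^ h * vol G Finset.univ ≤ 1 / 4) (hk : Fintype.card V ≤ 2 ^ k) :
    RoutesUniformly G (2 * (h + k * ⌈6 / φ⌉₊))
      (2 * Fintype.card V * (9 + 48 * k) / (φ * δ)) := by
  intro w hw
  rcases isEmpty_or_nonempty V with _ | _
  · exact ⟨isEmptyElim, isEmptyElim, by simp⟩
  obtain ⟨o, c, hreach, hc⟩ := hG.exists_hub hφ hφ1 hw hδ hdeg hh hk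
  choose p hlen hcost using hreach
  refine ⟨fun u v => (p u).append (p v).reverse, fun u v => ?_, ?_⟩
  · rw [Walk.length_append, Walk.length_reverse, two_mul]
    exact add_le_add (hlen u) (hlen v)
  calc ∑ u, ∑ v, walkCost w ((p u).append (p v).reverse) ≤ ∑ u, ∑ v, (c u + c v) := by
        simp only [walkCost_append, walkCost_reverse]
        gcongr with u _ v _
        exacts [hcost u, hcost v]
    _ = 2 * Fintype.card V * ∑ v, c v := by
        simp only [Finset.sum_add_distrib, Finset.sum_const, Finset.card_univ, nsmul_eq_mul,
          ← Finset.mul_sum]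
        ring
    _ ≤ 2 * Fintype.card V * ((9 + 48 * k) * (∑ e, w e) / (φ * δ)) := by gcongr
    _ = 2 * Fintype.card V * (9 + 48 * k) / (φ * δ) * ∑ e, w e := by ring

lemma IsExpander.routesUniformly_floor_log (hG : IsExpander G φ) (hφ : 0 < φ) (hφ1 : φ ≤ 1) {δ : ℝ}
    (hδ : 0 < δ) (hdeg : ∀ v, δ ≤ (G.neighborSet v).ncard)
    (hn : 1 ≤ Real.log (Fintype.card V)) :
    RoutesUniformly G ⌊68 * (Real.log (Fintype.card V) / φ)⌋₊
      (306 * Fintype.card V * Real.log (Fintype.card V) / (φ * δ)) := by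
  set n := Fintype.card V
  set ℓ := Real.log n
  have hclog : (Nat.clog 2 n : ℝ) ≤ 3 * ℓ := natCast_clog_two_le hn
  have hone : 1 ≤ ℓ / φ := (one_le_div hφ).mpr (hφ1.trans hn)
  refine (hG.routesUniformly hφ hφ1 hδ hdeg (one_sub_pow_mul_vol_univ_le G hφ hφ1 hn)
    (Nat.le_pow_clog one_lt_two n)).mono (Nat.le_floor ?_) ?_
  · have hceil : (⌈12 * (ℓ / φ)⌉₊ : ℝ) ≤ 13 * (ℓ / φ) := by
      linarith [Nat.ceil_lt_add_one (by positivity : 0 ≤ 12 * (ℓ / φ))]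
    have hceil' : (⌈6 / φ⌉₊ : ℝ) ≤ 7 / φ := by
      have := Nat.ceil_lt_add_one (by positivity : 0 ≤ 6 / φ)
      have := (one_le_div hφ).mpr hφ1
      calc (⌈6 / φ⌉₊ : ℝ) ≤ 6 / φ + 1 / φ := by linarith
        _ = 7 / φ := by ring
    calc ((2 * (⌈12 * (ℓ / φ)⌉₊ + Nat.clog 2 n * ⌈6 / φ⌉₊) : ℕ) : ℝ)
        = 2 * (⌈12 * (ℓ / φ)⌉₊ + Nat.clog 2 n * ⌈6 / φ⌉₊) := by push_cast; rfl
      _ ≤ 2 * (13 * (ℓ / φ) + 3 * ℓ * (7 / φ)) := by gcongr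
      _ = 68 * (ℓ / φ) := by ring
  · calc 2 * n * (9 + 48 * Nat.clog 2 n) / (φ * δ)
        ≤ 2 * n * (9 * ℓ + 48 * (3 * ℓ)) / (φ * δ) := by gcongr; linarith
      _ = 306 * n * ℓ / (φ * δ) := by ring

end ExpanderRouting

section Derandomization

variable {J α τ : Type*} [Fintype J]

open scoped Finset

-- Multiplicative weights: the greedy choice keeps the potential `∑ j, β j * exp (∑ i, X j (ω i))`
-- from increasing.
lemma exists_fin_forall_sum_le_log {β : J → ℝ} (hβ : ∀ j, 0 < β j) {X : J → τ → ℝ}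
    (hgreedy : ∀ q : J → ℝ, (∀ j, 0 < q j) → ∃ x, ∑ j, q j * Real.exp (X j x) ≤ ∑ j, q j)
    (T : ℕ) : ∃ ω : Fin T → τ, ∀ j, ∑ i, X j (ω i) ≤ Real.log ((∑ j, β j) / β j) := by
  suffices hpotential : ∃ ω : Fin T → τ,
      ∑ j, β j * Real.exp (∑ i, X j (ω i)) ≤ ∑ j, β j by
    obtain ⟨ω, hω⟩ := hpotential
    refine ⟨ω, fun j => ?_⟩
    have hj := (Finset.single_le_sum (f := fun j => β j * Real.exp (∑ i, X j (ω i)))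
      (fun j _ => mul_nonneg (hβ j).le (Real.exp_pos _).le) (Finset.mem_univ j)).trans hω
    have hexp : Real.exp (∑ i, X j (ω i)) ≤ (∑ j, β j) / β j := (le_div_iff₀' (hβ j)).mpr hj
    exact (Real.le_log_iff_exp_le ((Real.exp_pos _).trans_le hexp)).mpr hexp
  induction T with
  | zero => exact ⟨Fin.elim0, by simp⟩
  | succ T ih =>
    obtain ⟨ω, hω⟩ := ih
    obtain ⟨x, hx⟩ := hgreedy (fun j => β j * Real.exp (∑ i, X j (ω i)))
      fun j => mul_pos (hβ j) (Real.exp_pos _)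
    refine ⟨Fin.snoc ω x, le_trans ?_ (hx.trans hω)⟩
    simp [Fin.sum_univ_castSucc, Real.exp_add, mul_assoc]

variable [Fintype α]

lemma sum_mul_sum_exp_ite_sub_le {A : J → α → Prop} [∀ j x, Decidable (A j x)] {q : J → ℝ}
    {p : ℝ} (hq : ∀ j, 0 ≤ q j)
    (hA : ∑ j, q j * #{x | A j x} ≤ p * Fintype.card α * ∑ j, q j) :
    ∑ j, q j * ∑ x, Real.exp ((if A j x then 1 else 0) - 2 * p) ≤
      Fintype.card α * ∑ j, q j := by
  have exp_ite_le (P : Prop) [Decidable P] :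
      Real.exp (if P then 1 else 0) ≤ 1 + 2 * if P then 1 else 0 := by
    split_ifs
    · linarith [Real.exp_one_lt_d9]
    · simp
  calc ∑ j, q j * ∑ x, Real.exp ((if A j x then 1 else 0) - 2 * p)
      ≤ ∑ j, q j * ∑ x, Real.exp (-(2 * p)) * (1 + 2 * if A j x then 1 else 0) := by
        gcongr with j _ x _
        · exact hq j
        · rw [sub_eq_neg_add, Real.exp_add]
          gcongr
          exact exp_ite_le _
    _ = Real.exp (-(2 * p)) * (Fintype.card α * ∑ j, q j + 2 * ∑ j, q j * #{x | A j x}) := by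
        have sum_linear (j : J) : ∑ x, Real.exp (-(2 * p)) * (1 + 2 * if A j x then 1 else 0) =
            Real.exp (-(2 * p)) * (Fintype.card α + 2 * #{x | A j x}) := by
          rw [← Finset.mul_sum, Finset.sum_add_distrib, ← Finset.mul_sum, Finset.sum_boole]
          simp
        simp only [sum_linear, Finset.mul_sum, ← Finset.sum_add_distrib]
        exact Finset.sum_congr rfl fun j _ => by ring
    _ ≤ Real.exp (-(2 * p)) * (Real.exp (2 * p) * (Fintype.card α * ∑ j, q j)) := by
        have hsum : 0 ≤ Fintype.card α * ∑ j, q j :=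
          mul_nonneg (Nat.cast_nonneg _) (Finset.sum_nonneg fun j _ => hq j)
        gcongr
        nlinarith [mul_le_mul_of_nonneg_right (Real.add_one_le_exp (2 * p)) hsum]
    _ = Fintype.card α * ∑ j, q j := by
        rw [← mul_assoc, ← Real.exp_add, neg_add_cancel, Real.exp_zero, one_mul]

lemma sum_exp_sub_ite_le {A : α → Prop} [DecidablePred A] {p : ℝ}
    (hA : p * Fintype.card α ≤ #{x | A x}) :
    ∑ x, Real.exp (p / 2 - if A x then 1 else 0) ≤ Fintype.card α := by
  have exp_neg_ite_le (P : Prop) [Decidable P] :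
      Real.exp (-if P then 1 else 0) ≤ 1 - (if P then 1 else 0) / 2 := by
    split_ifs
    · linarith [Real.exp_neg_one_lt_d9]
    · simp
  calc ∑ x, Real.exp (p / 2 - if A x then 1 else 0)
      ≤ ∑ x, Real.exp (p / 2) * (1 - (if A x then 1 else 0) / 2) := by
        gcongr with x _
        rw [sub_eq_add_neg, Real.exp_add]
        gcongr
        exact exp_neg_ite_le _
    _ = Real.exp (p / 2) * (Fintype.card α - #{x | A x} / 2) := by
        simp [← Finset.mul_sum, ← Finset.sum_div]
    _ ≤ Real.exp (p / 2) * (Real.exp (-(p / 2)) * Fintype.card α) := by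
        gcongr
        nlinarith [mul_le_mul_of_nonneg_right (Real.add_one_le_exp (-(p / 2)))
          (Nat.cast_nonneg (α := ℝ) (Fintype.card α))]
    _ = Fintype.card α := by
        rw [← mul_assoc, ← Real.exp_add, add_neg_cancel, Real.exp_zero, one_mul]

end Derandomization

section Sampling

open scoped Finset

variable {V : Type*} {G : SimpleGraph V} {L : ℕ} {κ : ℝ}

/-- A walk of at most `L` edges in `G`, bundled with its endpoints: the objects that are sampled. -/
structure ShortWalk (G : SimpleGraph V) (L : ℕ) where
  src : V
  dst : V
  walk : G.Walk src dst
  length_le : walk.length ≤ L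

variable [Fintype V]

/-- Initial weights of the events that an edge is used too often, a vertex is the source too often,
or a cut is crossed too rarely (see `sampleDeviation`). The `n.choose s` cuts with `s` vertices on
one side share a weight of at most `1`. -/
noncomputable def sampleWeight : Sym2 V ⊕ V ⊕ Finset V → ℝ
  | .inl _ => 1
  | .inr (.inl _) => 1
  | .inr (.inr S) => (1 / Fintype.card V : ℝ) ^ #S

lemma sampleWeight_pos [Nonempty V] (j : Sym2 V ⊕ V ⊕ Finset V) : 0 < sampleWeight j := by
  have : (0 : ℝ) < Fintype.card V := by exact_mod_cast Fintype.card_pos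
  rcases j with _ | _ | _ <;> simp only [sampleWeight] <;> positivity

lemma sum_sampleWeight_le (hn : 3 ≤ Fintype.card V) :
    ∑ j : Sym2 V ⊕ V ⊕ Finset V, sampleWeight j ≤ (Fintype.card V : ℝ) ^ 3 := by
  have hn' : (3 : ℝ) ≤ Fintype.card V := by exact_mod_cast hn
  have hedges : (Fintype.card (Sym2 V) : ℝ) = (Fintype.card V + 1) * Fintype.card V / 2 := by
    rw [Sym2.card, Nat.cast_choose_two]
    push_cast
    ring
  have hcuts : ∑ S : Finset V, (1 / Fintype.card V : ℝ) ^ #S ≤ 3 := by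
    calc ∑ S : Finset V, (1 / Fintype.card V : ℝ) ^ #S
        = (1 / Fintype.card V + 1) ^ Fintype.card V := by
          simpa using Fintype.sum_pow_mul_eq_add_pow V (1 / Fintype.card V : ℝ) 1
      _ ≤ Real.exp (1 / Fintype.card V) ^ Fintype.card V := by
          gcongr
          exact Real.add_one_le_exp _
      _ = Real.exp 1 := by
          rw [← Real.exp_nat_mul, mul_one_div_cancel (by positivity)]
      _ ≤ 3 := by linarith [Real.exp_one_lt_d9]
  simp only [Fintype.sum_sum_type, sampleWeight, Finset.sum_const, Finset.card_univ, nsmul_eq_mul,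
    mul_one, hedges]
  nlinarith

variable [DecidableEq V]

/-- The signed amount by which one sampled walk deviates from the tolerated average load, for the
three families of events controlled by the sampling: an edge is used too often, a vertex is the
source too often, a cut is crossed too rarely. Uniform pairs of endpoints routed with congestion `κ`
have averages `κ / n ^ 2`, `1 / n` and `|S| * (n - |S|) / n ^ 2`; a factor `2` is tolerated. -/
noncomputable def sampleDeviation (κ : ℝ) : Sym2 V ⊕ V ⊕ Finset V → ShortWalk G L → ℝ
  | .inl e, x => (if e ∈ x.walk.edges then 1 else 0) - 2 * (κ / Fintype.card V ^ 2)
  | .inr (.inl v), x => (if x.src = v then 1 else 0) - 2 * (1 / Fintype.card V)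
  | .inr (.inr S), x => (#S * (Fintype.card V - #S) / Fintype.card V ^ 2 : ℝ) / 2 -
      if x.src ∈ S ∧ x.dst ∉ S then 1 else 0

lemma card_filter_mem_and_notMem (S : Finset V) :
    #{x : V × V | x.1 ∈ S ∧ x.2 ∉ S} = #S * (Fintype.card V - #S) := by
  rw [← Finset.card_compl, ← Finset.card_product]
  congr 1
  ext x
  simp

lemma sum_mul_card_filter_mem_edges_le {ι : Type*} [Fintype ι] {w : Sym2 V → ℝ}
    (hw : ∀ e, 0 ≤ w e) (R : ι → ShortWalk G L) :
    ∑ e, w e * #{i | e ∈ (R i).walk.edges} ≤ ∑ i, walkCost w (R i).walk := by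
  have hswap : ∑ e, w e * #{i | e ∈ (R i).walk.edges} =
      ∑ i, ∑ e ∈ (R i).walk.edges.toFinset, w e := by
    simp only [← Finset.sum_boole, Finset.mul_sum, mul_ite, mul_one, mul_zero]
    rw [Finset.sum_comm]
    refine Finset.sum_congr rfl fun i _ => ?_
    rw [← Finset.sum_filter]
    congr 1
    ext e
    simp
  rw [hswap]
  exact Finset.sum_le_sum fun i _ => sum_edges_toFinset_le_walkCost hw _

lemma card_filter_fst_eq (v : V) : #{x : V × V | x.1 = v} = Fintype.card V := by
  have hprod : ({x : V × V | x.1 = v} : Finset (V × V)) = {v} ×ˢ Finset.univ := by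
    ext x
    simp [Prod.ext_iff, eq_comm]
  rw [hprod, Finset.card_product, Finset.card_singleton, one_mul, Finset.card_univ]

lemma RoutesUniformly.exists_sum_mul_exp_sampleDeviation_le [Nonempty V]
    (h : RoutesUniformly G L κ) {q : Sym2 V ⊕ V ⊕ Finset V → ℝ} (hq : ∀ j, 0 < q j) :
    ∃ x : ShortWalk G L, ∑ j, q j * Real.exp (sampleDeviation κ j x) ≤ ∑ j, q j := by
  obtain ⟨P, hlen, hcost⟩ := h (fun e => q (.inl e)) fun e => hq _
  let R (x : V × V) : ShortWalk G L := ⟨x.1, x.2, P x.1 x.2, hlen x.1 x.2⟩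
  have hn : (Fintype.card V : ℝ) ≠ 0 := by exact_mod_cast Fintype.card_ne_zero
  have hedges : ∑ e, q (.inl e) * ∑ x, Real.exp (sampleDeviation κ (.inl e) (R x)) ≤
      Fintype.card (V × V) * ∑ e, q (.inl e) := by
    refine sum_mul_sum_exp_ite_sub_le (fun e => (hq _).le) ?_
    calc ∑ e, q (.inl e) * #{x | e ∈ (R x).walk.edges}
        ≤ ∑ x, walkCost (fun e => q (.inl e)) (R x).walk :=
          sum_mul_card_filter_mem_edges_le (fun e => (hq _).le) R
      _ ≤ κ * ∑ e, q (.inl e) := by rwa [Fintype.sum_prod_type]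
      _ = κ / Fintype.card V ^ 2 * Fintype.card (V × V) * ∑ e, q (.inl e) := by
          rw [Fintype.card_prod]
          push_cast
          field_simp
  have hsrc : ∑ v, q (.inr (.inl v)) * ∑ x, Real.exp (sampleDeviation κ (.inr (.inl v)) (R x)) ≤
      Fintype.card (V × V) * ∑ v, q (.inr (.inl v)) := by
    refine sum_mul_sum_exp_ite_sub_le (fun v => (hq _).le) ?_
    rw [Finset.mul_sum]
    refine Finset.sum_le_sum fun v _ => ?_
    rw [card_filter_fst_eq, Fintype.card_prod]
    push_cast
    field_simp
    rfl
  have hcuts : ∑ S, q (.inr (.inr S)) * ∑ x, Real.exp (sampleDeviation κ (.inr (.inr S)) (R x)) ≤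
      Fintype.card (V × V) * ∑ S, q (.inr (.inr S)) := by
    rw [Finset.mul_sum]
    refine Finset.sum_le_sum fun S _ => ?_
    rw [mul_comm]
    refine mul_le_mul_of_nonneg_right (sum_exp_sub_ite_le ?_) (hq _).le
    rw [card_filter_mem_and_notMem, Fintype.card_prod]
    push_cast [Nat.cast_sub S.card_le_univ]
    field_simp
    rfl
  have htotal : ∑ x, ∑ j, q j * Real.exp (sampleDeviation κ j (R x)) ≤
      ∑ _x : V × V, ∑ j, q j := by
    rw [Finset.sum_comm]
    simp only [← Finset.mul_sum, Fintype.sum_sum_type, Finset.sum_const, Finset.card_univ,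
      nsmul_eq_mul]
    linarith
  obtain ⟨x, -, hx⟩ := Finset.exists_le_of_sum_le Finset.univ_nonempty htotal
  exact ⟨R x, hx⟩

lemma RoutesUniformly.exists_sample (h : RoutesUniformly G L κ) (hn : 3 ≤ Fintype.card V) (T : ℕ) :
    ∃ ω : Fin T → ShortWalk G L,
      (∀ e, (#{i | e ∈ (ω i).walk.edges} : ℝ) ≤
        2 * κ * T / Fintype.card V ^ 2 + 3 * Real.log (Fintype.card V)) ∧
      (∀ v, (#{i | (ω i).src = v} : ℝ) ≤
        2 * T / Fintype.card V + 3 * Real.log (Fintype.card V)) ∧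
      ∀ S : Finset V, T * (#S * (Fintype.card V - #S)) / (2 * Fintype.card V ^ 2) -
        (#S + 3) * Real.log (Fintype.card V) ≤ (#{i | (ω i).src ∈ S ∧ (ω i).dst ∉ S} : ℝ) := by
  have : Nonempty V := Fintype.card_pos_iff.mp (by omega)
  have : (0 : ℝ) < Fintype.card V := by exact_mod_cast Fintype.card_pos
  obtain ⟨ω, hω⟩ := exists_fin_forall_sum_le_log (sampleWeight_pos (V := V))
    (fun q hq => h.exists_sum_mul_exp_sampleDeviation_le hq) T
  have hlog (j : Sym2 V ⊕ V ⊕ Finset V) : ∑ i, sampleDeviation κ j (ω i) ≤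
      3 * Real.log (Fintype.card V) - Real.log (sampleWeight j) := by
    have hj := sampleWeight_pos j
    have hsum := Finset.sum_pos (fun j _ => sampleWeight_pos j)
      (Finset.univ_nonempty (α := Sym2 V ⊕ V ⊕ Finset V))
    refine (hω j).trans ?_
    rw [Real.log_div hsum.ne' hj.ne']
    gcongr
    calc Real.log (∑ j : Sym2 V ⊕ V ⊕ Finset V, sampleWeight j)
        ≤ Real.log ((Fintype.card V : ℝ) ^ 3) := Real.log_le_log hsum (sum_sampleWeight_le hn)
      _ = 3 * Real.log (Fintype.card V) := by rw [Real.log_pow]; norm_num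
  refine ⟨ω, fun e => ?_, fun v => ?_, fun S => ?_⟩
  · have hdev := hlog (.inl e)
    simp only [sampleDeviation, sampleWeight, Finset.sum_sub_distrib, Finset.sum_boole,
      Finset.sum_const, Finset.card_fin, nsmul_eq_mul, Real.log_one] at hdev
    linear_combination hdev
  · have hdev := hlog (.inr (.inl v))
    simp only [sampleDeviation, sampleWeight, Finset.sum_sub_distrib, Finset.sum_boole,
      Finset.sum_const, Finset.card_fin, nsmul_eq_mul, Real.log_one] at hdev
    linear_combination hdev
  · have hdev := hlog (.inr (.inr S))
    simp only [sampleDeviation, sampleWeight, Finset.sum_sub_distrib, Finset.sum_boole,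
      Finset.sum_const, Finset.card_fin, nsmul_eq_mul, one_div, inv_pow, Real.log_inv,
      Real.log_pow] at hdev
    linear_combination hdev

end Sampling

section UnionGraph

open scoped Finset

variable {V : Type} {G : SimpleGraph V} {L : ℕ}

namespace ShortWalk

/-- The graph on all of `V` whose edges are those traversed by the walk. The sparsifier is the
supremum of these graphs over the sampled walks. -/
def toSimpleGraph (x : ShortWalk G L) : SimpleGraph V :=
  x.walk.toSubgraph.spanningCoe

lemma edgeSet_toSimpleGraph (x : ShortWalk G L) : x.toSimpleGraph.edgeSet = x.walk.edgeSet := by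
  rw [toSimpleGraph, Subgraph.edgeSet_spanningCoe, Walk.edgeSet_toSubgraph]

lemma iSup_toSimpleGraph_le {ι : Type*} (ω : ι → ShortWalk G L) : ⨆ i, (ω i).toSimpleGraph ≤ G :=
  iSup_le fun i => (ω i).walk.toSubgraph.spanningCoe_le

lemma ncard_edgeSet_toSimpleGraph_le (x : ShortWalk G L) : x.toSimpleGraph.edgeSet.ncard ≤ L := by
  classical
  rw [edgeSet_toSimpleGraph, ← Walk.coe_edges_toFinset, Set.ncard_coe_finset]
  exact (List.toFinset_card_le _).trans (x.walk.length_edges.trans_le x.length_le)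

lemma ncard_edgeSet_iSup_toSimpleGraph_le {ι : Type*} [Fintype ι] (ω : ι → ShortWalk G L) :
    (⨆ i, (ω i).toSimpleGraph).edgeSet.ncard ≤ Fintype.card ι * L := by
  rw [edgeSet_iSup]
  exact (Set.ncard_iUnion_le_of_fintype _).trans
    (Finset.sum_le_card_nsmul _ _ _ fun i _ => (ω i).ncard_edgeSet_toSimpleGraph_le)

lemma vol_toSimpleGraph_eq_zero (x : ShortWalk G L) {S : Finset V} (hsrc : x.src ∉ S)
    (hcross : ¬∃ e ∈ x.walk.edges, e ∈ edgeBoundary G S) : vol x.toSimpleGraph S = 0 := by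
  classical
  refine Finset.sum_eq_zero fun v hv => ?_
  have hnbr : x.toSimpleGraph.neighborSet v = ∅ := by
    refine Set.eq_empty_of_forall_notMem fun u hu => hcross ?_
    have hsupport : v ∈ x.walk.support := x.walk.mem_support_of_adj_toSubgraph hu
    obtain ⟨e, he, heS⟩ := exists_mem_edges_edgeBoundary (x.walk.takeUntil v hsupport)
      (by simp [hsrc, hv] : x.src ∈ S ↔ v ∉ S)
    exact ⟨e, x.walk.edges_takeUntil_subset_edges hsupport he, heS⟩
  rw [hnbr, Set.ncard_empty]

variable {ι : Type*} [Fintype ι] {ω : ι → ShortWalk G L} {K f : ℝ}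

lemma vol_iSup_toSimpleGraph_le [Finite V] [DecidableEq V] (ω : ι → ShortWalk G L) (S : Finset V)
    [DecidablePred fun i => ∃ e ∈ (ω i).walk.edges, e ∈ edgeBoundary G S] :
    vol (⨆ i, (ω i).toSimpleGraph) S ≤
      2 * L * (#{i | (ω i).src ∈ S} + #{i | ∃ e ∈ (ω i).walk.edges, e ∈ edgeBoundary G S}) := by
  have vol_le (i : ι) : vol (ω i).toSimpleGraph S ≤ 2 * L * ((if (ω i).src ∈ S then 1 else 0) +
      if ∃ e ∈ (ω i).walk.edges, e ∈ edgeBoundary G S then 1 else 0) := by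
    by_cases hvisit : (ω i).src ∈ S ∨ ∃ e ∈ (ω i).walk.edges, e ∈ edgeBoundary G S
    · calc vol (ω i).toSimpleGraph S ≤ 2 * (ω i).toSimpleGraph.edgeSet.ncard :=
            vol_le_two_mul_ncard_edgeSet _ S
        _ ≤ 2 * L * 1 := by
            rw [mul_one]
            exact Nat.mul_le_mul_left 2 (ω i).ncard_edgeSet_toSimpleGraph_le
        _ ≤ _ := by
            gcongr
            split_ifs <;> simp_all
    · rw [(ω i).vol_toSimpleGraph_eq_zero (not_or.mp hvisit).1 (not_or.mp hvisit).2]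
      exact Nat.zero_le _
  calc vol (⨆ i, (ω i).toSimpleGraph) S ≤ ∑ i, vol (ω i).toSimpleGraph S := vol_iSup_le _ S
    _ ≤ _ := Finset.sum_le_sum fun i _ => vol_le i
    _ = _ := by
      rw [← Finset.mul_sum, Finset.sum_add_distrib, Finset.card_filter, Finset.card_filter]

lemma card_filter_src_mem_le [DecidableEq V] (hsrc : ∀ v, (#{i | (ω i).src = v} : ℝ) ≤ f)
    (S : Finset V) : (#{i | (ω i).src ∈ S} : ℝ) ≤ f * #S := by
  classical
  have hcard : #{i | (ω i).src ∈ S} ≤ ∑ v ∈ S, #{i | (ω i).src = v} := by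
    refine (Finset.card_le_card fun i hi => ?_).trans Finset.card_biUnion_le
    simpa using hi
  calc (#{i | (ω i).src ∈ S} : ℝ) ≤ ∑ v ∈ S, (#{i | (ω i).src = v} : ℝ) := by exact_mod_cast hcard
    _ ≤ #S • f := Finset.sum_le_card_nsmul _ _ _ fun v _ => hsrc v
    _ = f * #S := by rw [nsmul_eq_mul, mul_comm]

lemma card_filter_crossing_le [Finite V] [DecidableEq V]
    (hK : ∀ e, (#{i | e ∈ (ω i).walk.edges} : ℝ) ≤ K) (S : Finset V)
    [DecidablePred fun i => ∃ e ∈ (ω i).walk.edges, e ∈ edgeBoundary G S] :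
    (#{i | ∃ e ∈ (ω i).walk.edges, e ∈ edgeBoundary G S} : ℝ) ≤
      K * (edgeBoundary (⨆ i, (ω i).toSimpleGraph) S).ncard := by
  classical
  let B := (edgeBoundary (⨆ i, (ω i).toSimpleGraph) S).toFinite.toFinset
  have hcard : #{i | ∃ e ∈ (ω i).walk.edges, e ∈ edgeBoundary G S} ≤
      ∑ e ∈ B, #{i | e ∈ (ω i).walk.edges} := by
    refine (Finset.card_le_card fun i hi => ?_).trans Finset.card_biUnion_le
    obtain ⟨e, he, -, heS⟩ := (Finset.mem_filter.mp hi).2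
    have heH : e ∈ (⨆ i, (ω i).toSimpleGraph).edgeSet := by
      rw [edgeSet_iSup, Set.mem_iUnion]
      exact ⟨i, by rwa [edgeSet_toSimpleGraph]⟩
    simp only [Finset.mem_biUnion, Finset.mem_filter, Finset.mem_univ, true_and]
    exact ⟨e, (Set.Finite.mem_toFinset _).mpr ⟨heH, heS⟩, he⟩
  calc (#{i | ∃ e ∈ (ω i).walk.edges, e ∈ edgeBoundary G S} : ℝ)
      ≤ ∑ e ∈ B, (#{i | e ∈ (ω i).walk.edges} : ℝ) := by exact_mod_cast hcard
    _ ≤ #B • K := Finset.sum_le_card_nsmul _ _ _ fun e _ => hK e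
    _ = K * (edgeBoundary (⨆ i, (ω i).toSimpleGraph) S).ncard := by
      rw [nsmul_eq_mul, mul_comm, Set.ncard_eq_toFinset_card _ (Set.toFinite _)]

lemma card_filter_mem_and_notMem_le [Finite V] [DecidableEq V]
    (hK : ∀ e, (#{i | e ∈ (ω i).walk.edges} : ℝ) ≤ K) (S : Finset V) :
    (#{i | (ω i).src ∈ S ∧ (ω i).dst ∉ S} : ℝ) ≤
      K * (edgeBoundary (⨆ i, (ω i).toSimpleGraph) S).ncard := by
  classical
  refine le_trans ?_ (card_filter_crossing_le hK S)
  have hcard : #{i | (ω i).src ∈ S ∧ (ω i).dst ∉ S} ≤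
      #{i | ∃ e ∈ (ω i).walk.edges, e ∈ edgeBoundary G S} := by
    refine Finset.card_le_card (Finset.monotone_filter_right _ fun i _ hi => ?_)
    exact exists_mem_edges_edgeBoundary (ω i).walk (iff_of_true hi.1 hi.2)
  exact_mod_cast hcard

lemma vol_iSup_toSimpleGraph_le_mul_ncard_edgeBoundary [Finite V] [DecidableEq V]
    (hK : ∀ e, (#{i | e ∈ (ω i).walk.edges} : ℝ) ≤ K)
    (hsrc : ∀ v, (#{i | (ω i).src = v} : ℝ) ≤ 3 * f) {S : Finset V}
    (hS : f * #S / 8 ≤ #{i | (ω i).src ∈ S ∧ (ω i).dst ∉ S}) :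
    (vol (⨆ i, (ω i).toSimpleGraph) S : ℝ) ≤
      50 * L * K * (edgeBoundary (⨆ i, (ω i).toSimpleGraph) S).ncard := by
  classical
  set H := ⨆ i, (ω i).toSimpleGraph
  have hcross := card_filter_crossing_le hK S
  have hsize : f * #S ≤ 8 * (K * (edgeBoundary H S).ncard) := by
    linarith [card_filter_mem_and_notMem_le hK S]
  have hsrcS := card_filter_src_mem_le hsrc S
  calc (vol H S : ℝ)
      ≤ 2 * L * (#{i | (ω i).src ∈ S} +
          #{i | ∃ e ∈ (ω i).walk.edges, e ∈ edgeBoundary G S}) := by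
        exact_mod_cast vol_iSup_toSimpleGraph_le ω S
    _ ≤ 2 * L * (25 * (K * (edgeBoundary H S).ncard)) := by
        gcongr
        linarith
    _ = 50 * L * K * (edgeBoundary H S).ncard := by ring

lemma isExpander_iSup_toSimpleGraph [Fintype V] [DecidableEq V] (hn : 2 ≤ Fintype.card V)
    (hf : 0 < f) (hK : ∀ e, (#{i | e ∈ (ω i).walk.edges} : ℝ) ≤ K)
    (hsrc : ∀ v, (#{i | (ω i).src = v} : ℝ) ≤ 3 * f)
    (hcut : ∀ S : Finset V, S.Nonempty → 2 * #S ≤ Fintype.card V →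
      f * #S / 8 ≤ #{i | (ω i).src ∈ S ∧ (ω i).dst ∉ S}) :
    IsExpander (⨆ i, (ω i).toSimpleGraph) (1 / (50 * L * K)) ∧
      ∀ v, f / (8 * K) ≤ ((⨆ i, (ω i).toSimpleGraph).neighborSet v).ncard := by
  set H := ⨆ i, (ω i).toSimpleGraph
  have hdeg (v : V) : f / 8 ≤ K * (H.neighborSet v).ncard := by
    have := hcut {v} (Finset.singleton_nonempty v) (by simpa using hn)
    have := this.trans (card_filter_mem_and_notMem_le hK {v})
    rwa [Finset.card_singleton, Nat.cast_one, mul_one, ncard_edgeBoundary_singleton] at this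
  have hK0 : 0 ≤ K := by
    obtain ⟨v⟩ : Nonempty V := Fintype.card_pos_iff.mp (by omega)
    exact (Nat.cast_nonneg _).trans (hK s(v, v))
  refine ⟨isExpander_of_mul_vol_le (by positivity) (fun v => ?_) fun S hS hS' => ?_, fun v => ?_⟩
  · rw [Nat.pos_iff_ne_zero]
    intro hzero
    have := hdeg v
    rw [hzero, Nat.cast_zero, mul_zero] at this
    linarith
  · rw [one_div_mul_eq_div]
    refine div_le_of_le_mul₀ (by positivity) (Nat.cast_nonneg _) ?_
    rw [mul_comm]
    exact vol_iSup_toSimpleGraph_le_mul_ncard_edgeBoundary hK hsrc (hcut S hS hS')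
  · refine div_le_of_le_mul₀ (by positivity) (Nat.cast_nonneg _) ?_
    linarith [hdeg v]

end ShortWalk

lemma mul_div_eight_le_mul_div_sub {f n s ℓ : ℝ} (hs : 1 ≤ s) (hsn : 2 * s ≤ n) (hℓ : 0 ≤ ℓ)
    (hf : 32 * ℓ ≤ f) : f * s / 8 ≤ f * n * (s * (n - s)) / (2 * n ^ 2) - (s + 3) * ℓ := by
  have hmean : f * s / 4 ≤ f * n * (s * (n - s)) / (2 * n ^ 2) := by
    rw [le_div_iff₀ (by nlinarith)]
    nlinarith [mul_nonneg (mul_nonneg (by linarith : 0 ≤ f) (by linarith : 0 ≤ s))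
      (mul_nonneg (by linarith : 0 ≤ n) (sub_nonneg.mpr hsn))]
  have hloss : (s + 3) * ℓ ≤ f * s / 8 := by
    calc (s + 3) * ℓ ≤ (4 * s) * ℓ := by gcongr; linarith
      _ = s / 8 * (32 * ℓ) := by ring
      _ ≤ s / 8 * f := by gcongr
      _ = f * s / 8 := by ring
  linarith

lemma RoutesUniformly.exists_sparse_expander [Fintype V] [DecidableEq V] {κ : ℝ}
    (h : RoutesUniformly G L κ) (hn : 3 ≤ Fintype.card V) {f : ℕ}
    (hf : 32 * Real.log (Fintype.card V) ≤ f) :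
    ∃ H ≤ G, IsExpander H (1 / (50 * L * (2 * κ * f / Fintype.card V +
        3 * Real.log (Fintype.card V)))) ∧
      H.edgeSet.ncard ≤ f * Fintype.card V * L ∧
      ∀ v, f / (8 * (2 * κ * f / Fintype.card V + 3 * Real.log (Fintype.card V))) ≤
        ((H.neighborSet v).ncard : ℝ) := by
  obtain ⟨ω, hedges, hsrc, hcuts⟩ := h.exists_sample hn (f * Fintype.card V)
  have hn' : (3 : ℝ) ≤ Fintype.card V := by exact_mod_cast hn
  have hlog : 0 < Real.log (Fintype.card V) := Real.log_pos (by linarith)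
  have hK (e : Sym2 V) : (#{i | e ∈ (ω i).walk.edges} : ℝ) ≤
      2 * κ * f / Fintype.card V + 3 * Real.log (Fintype.card V) := by
    refine (hedges e).trans_eq ?_
    push_cast
    field_simp
  have hsrc3 (v : V) : (#{i | (ω i).src = v} : ℝ) ≤ 3 * f := by
    refine (hsrc v).trans ?_
    rw [Nat.cast_mul, ← mul_assoc, mul_div_cancel_right₀ _ (by positivity)]
    linarith
  have hcut (S : Finset V) (hS : S.Nonempty) (hS' : 2 * #S ≤ Fintype.card V) :
      (f * #S / 8 : ℝ) ≤ #{i | (ω i).src ∈ S ∧ (ω i).dst ∉ S} := by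
    refine (mul_div_eight_le_mul_div_sub (n := Fintype.card V) ?_ ?_ hlog.le hf).trans ?_
    · exact_mod_cast hS.card_pos
    · exact_mod_cast hS'
    · simpa only [Nat.cast_mul] using hcuts S
  obtain ⟨hexp, hdeg⟩ :=
    ShortWalk.isExpander_iSup_toSimpleGraph (by omega) (by linarith) hK hsrc3 hcut
  refine ⟨_, ShortWalk.iSup_toSimpleGraph_le ω, hexp, ?_, hdeg⟩
  simpa using ShortWalk.ncard_edgeSet_iSup_toSimpleGraph_le ω

end UnionGraph

section Sparsification

variable {V : Type} [Fintype V] [DecidableEq V] {G : SimpleGraph V} {φ : ℝ}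

lemma one_le_log_of_three_le {n : ℕ} (hn : 3 ≤ n) : 1 ≤ Real.log n := by
  rw [Real.le_log_iff_exp_le (by positivity)]
  exact Real.exp_one_lt_three.le.trans (by exact_mod_cast hn)

lemma IsExpander.exists_sparse_expander (hG : IsExpander G φ) (hφ : 0 < φ) (hφ1 : φ ≤ 1)
    (hn : 3 ≤ Fintype.card V) {f : ℕ} (hdeg : ∀ v, f ≤ (G.neighborSet v).ncard)
    (hf : 32 * Real.log (Fintype.card V) ≤ f) :
    ∃ H ≤ G, IsExpander H (φ ^ 2 / (2091000 * Real.log (Fintype.card V) ^ 2)) ∧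
      (H.edgeSet.ncard : ℝ) ≤ 68 * f * Fintype.card V * Real.log (Fintype.card V) / φ ∧
      ∀ v, f * φ / (4920 * Real.log (Fintype.card V)) ≤ ((H.neighborSet v).ncard : ℝ) := by
  have hlog : 1 ≤ Real.log (Fintype.card V) := one_le_log_of_three_le hn
  have hf0 : (0 : ℝ) < f := by linarith
  obtain ⟨H, hHG, hexp, hedges, hdegH⟩ := (hG.routesUniformly_floor_log hφ hφ1 hf0
    (fun v => by exact_mod_cast hdeg v) hlog).exists_sparse_expander hn hf
  set n := Fintype.card V
  set ℓ := Real.log n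
  have hone : 1 ≤ ℓ / φ := (one_le_div hφ).mpr (hφ1.trans hlog)
  have hL : (⌊68 * (ℓ / φ)⌋₊ : ℝ) ≤ 68 * (ℓ / φ) := Nat.floor_le (by positivity)
  have hL0 : (0 : ℝ) < ⌊68 * (ℓ / φ)⌋₊ := by
    exact_mod_cast Nat.floor_pos.mpr (by linarith)
  have hK : 2 * (306 * n * ℓ / (φ * f)) * f / n + 3 * ℓ ≤ 615 * (ℓ / φ) := by
    have hℓ : ℓ ≤ ℓ / φ := le_div_self (by linarith) hφ hφ1
    calc 2 * (306 * n * ℓ / (φ * f)) * f / n + 3 * ℓ = 612 * (ℓ / φ) + 3 * ℓ := by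
          field_simp
          ring
      _ ≤ 615 * (ℓ / φ) := by linarith
  refine ⟨H, hHG, hexp.mono ?_, ?_, fun v => le_trans ?_ (hdegH v)⟩
  · calc φ ^ 2 / (2091000 * ℓ ^ 2) = 1 / (50 * (68 * (ℓ / φ)) * (615 * (ℓ / φ))) := by
          field_simp
          norm_num
      _ ≤ _ := by gcongr
  · calc (H.edgeSet.ncard : ℝ) ≤ f * n * ⌊68 * (ℓ / φ)⌋₊ := by exact_mod_cast hedges
      _ ≤ f * n * (68 * (ℓ / φ)) := by gcongr
      _ = 68 * f * n * ℓ / φ := by ring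
  · calc f * φ / (4920 * ℓ) = f / (8 * (615 * (ℓ / φ))) := by
          field_simp
          norm_num
      _ ≤ _ := by gcongr

end Sparsification

/-- **expander sparsification.** There are absolute constants `C, c > 0` such
that every `n`-vertex `φ`-expander `G` (`0 < φ ≤ 1`) with minimum degree at least `f'`,
where `C·log n ≤ f' ≤ n`, admits a spanning subgraph `H ≤ G` with
(i) conductance at least `φ²/(C·(log n)^c)`,
(ii) at most `C·f'·n·(log n)/φ` edges, and
(iii) minimum degree at least `f'·φ/(C·(log n)^c)`. -/
theorem expander_sparsification :
    ∃ C c : ℝ, 0 < C ∧ 0 < c ∧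
      ∀ (V : Type) [Fintype V] [DecidableEq V], ∀ (G : SimpleGraph V) (φ : ℝ) (f' : ℕ),
        0 < φ → φ ≤ 1 →
        C * Real.log (Fintype.card V) ≤ f' → f' ≤ Fintype.card V →
        (∀ v : V, f' ≤ (G.neighborSet v).ncard) →
        IsExpander G φ →
        ∃ H : SimpleGraph V, H ≤ G ∧
          IsExpander H (φ ^ 2 / (C * Real.log (Fintype.card V) ^ c)) ∧
          (H.edgeSet.ncard : ℝ) ≤ C * f' * Fintype.card V * Real.log (Fintype.card V) / φ ∧
          ∀ v : V, (f' : ℝ) * φ / (C * Real.log (Fintype.card V) ^ c) ≤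
            (H.neighborSet v).ncard := by
  refine ⟨2091000, 2, by norm_num, by norm_num, fun V _ _ G φ f hφ hφ1 hf hfn hdeg hG => ?_⟩
  rw [Real.rpow_two]
  rcases le_or_gt (Fintype.card V) 1 with hsmall | hlarge
  · have : Subsingleton V := Fintype.card_le_one_iff_subsingleton.mp hsmall
    have hlog : Real.log (Fintype.card V) = 0 := by
      interval_cases Fintype.card V <;> simp
    exact ⟨⊥, bot_le, .of_subsingleton ⊥ _, by simp [hlog], by simp [hlog]⟩
  have hlog_two : Real.log 2 ≤ Real.log (Fintype.card V) :=
    Real.log_le_log two_pos (by exact_mod_cast hlarge)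
  have hn : 3 ≤ Fintype.card V := hfn.trans' <| by
    exact_mod_cast (by linarith [Real.log_two_gt_d9] : (3 : ℝ) ≤ f)
  have hlog := one_le_log_of_three_le hn
  obtain ⟨H, hHG, hexp, hedges, hdegH⟩ :=
    hG.exists_sparse_expander hφ hφ1 hn hdeg (by linarith)
  refine ⟨H, hHG, hexp, hedges.trans ?_, fun v => (hdegH v).trans' ?_⟩
  · gcongr
    norm_num
  · gcongr
    · norm_num
    · exact le_self_pow₀ hlog two_ne_zero
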